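/- Among all trees on n ≥ 3 vertices, the path P_n uniquely minimizes the Albertson index; that is, for every tree T on n vertices, irr(T) ≥ 2 = irr(P_n), with equality if and only if T is isomorphic to P_n. -/

import Mathlib

open SimpleGraph Finset

noncomputable instance decAdjInst {V : Type*} (G : SimpleGraph V) : DecidableRel G.Adj :=
  Classical.decRel _

/-- Albertson irregularity index: `∑_{uv ∈ E(G)} |deg u - deg v|`. -/
noncomputable def irr {V : Type*} [Fintype V] (G : SimpleGraph V) : ℕ := by
  classical
  exact ∑ e ∈ G.edgeFinset,
    Sym2.lift ⟨fun u v => ((G.degree u : ℤ) - (G.degree v : ℤ)).natAbs,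
      fun u v => by dsimp only; rw [← Int.natAbs_neg, neg_sub]⟩ e

/-- Sigma index: `∑_{uv ∈ E(G)} (deg u - deg v)^2`. -/
noncomputable def sigmaIdx {V : Type*} [Fintype V] (G : SimpleGraph V) : ℕ := by
  classical
  exact ∑ e ∈ G.edgeFinset,
    Sym2.lift ⟨fun u v => ((G.degree u : ℤ) - (G.degree v : ℤ)).natAbs ^ 2,
      fun u v => by dsimp only; rw [← Int.natAbs_neg, neg_sub]⟩ e

/-!
In a tree with at least two vertices, the handshake formula `∑ (deg v - 2) = -2` says that the
number of leaves is `2 + ∑ max (deg v - 2) 0`. With at least three vertices no two leaves are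
adjacent, so the edge at each leaf contributes at least `1` to the index and these edges are
distinct: `irr T` is at least the number of leaves, hence at least `2`. Equality forces every degree
to be at most `2`, and then the distance from a leaf numbers the vertices along a path. Conversely,
if every degree is at most `2` then only the edges at leaves contribute, each exactly `1`.
-/

section DistanceFromVertex

variable {V : Type*} {G : SimpleGraph V} {u : V}

lemma exists_adj_dist_eq_of_dist_eq_succ {v : V} {k : ℕ} (h : G.dist u v = k + 1) :
    ∃ w, G.Adj w v ∧ G.dist u w = k := by
  have hvu : G.dist v u = k + 1 := by rw [dist_comm, h]
  obtain ⟨p, hp⟩ := exists_walk_of_dist_ne_zero (hvu.trans_ne k.succ_ne_zero)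
  cases p with
  | nil => simp at hvu
  | @cons _ w _ hvw q =>
    have hq : G.dist w u = q.length := length_eq_dist_of_subwalk hp (q.isSubwalk_cons hvw) |>.symm
    rw [Walk.length_cons, hvu] at hp
    exact ⟨w, hvw.symm, by rw [dist_comm]; omega⟩

lemma adj_iff_of_dist_injective (hinj : Function.Injective (G.dist u)) {a b : V} :
    G.Adj a b ↔ G.dist u a + 1 = G.dist u b ∨ G.dist u b + 1 = G.dist u a := by
  constructor
  · intro hab
    have hne : G.dist u a ≠ G.dist u b := hinj.ne hab.ne
    have := hab.diff_dist_adj (u := u)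
    omega
  · rintro (h | h)
    · obtain ⟨w, hwb, hw⟩ := exists_adj_dist_eq_of_dist_eq_succ h.symm
      exact hinj hw ▸ hwb
    · obtain ⟨w, hwa, hw⟩ := exists_adj_dist_eq_of_dist_eq_succ h.symm
      exact hinj hw ▸ hwa.symm

lemma nonempty_iso_pathGraph_of_dist_injective [Fintype V] (hG : G.Connected)
    (hinj : Function.Injective (G.dist u)) :
    Nonempty (G ≃g pathGraph (Fintype.card V)) := by
  have dist_lt_card (v : V) : G.dist u v < Fintype.card V := by
    obtain ⟨p, hp, hlen⟩ := hG.exists_path_of_dist u v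
    exact hlen ▸ hp.length_lt
  let position (v : V) : Fin (Fintype.card V) := ⟨G.dist u v, dist_lt_card v⟩
  have hposition : Function.Bijective position :=
    (Fintype.bijective_iff_injective_and_card position).2
      ⟨fun _ _ h ↦ hinj (Fin.ext_iff.1 h), (Fintype.card_fin _).symm⟩
  exact ⟨⟨Equiv.ofBijective position hposition,
    pathGraph_adj.trans (adj_iff_of_dist_injective hinj).symm⟩⟩

variable [G.LocallyFinite]

lemma eq_of_adj_of_dist_eq_dist_add_one (hdeg : ∀ v, G.degree v ≤ 2) (hu : G.degree u ≤ 1)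
    (hG : G.Connected) {x y z : V} (hzx : G.Adj z x) (hzy : G.Adj z y)
    (hx : G.dist u x = G.dist u z + 1) (hy : G.dist u y = G.dist u z + 1) : x = y := by
  have mem_neighbors {v w : V} (h : G.Adj v w) : w ∈ G.neighborFinset v :=
    (G.mem_neighborFinset v w).2 h
  cases hz : G.dist u z with
  | zero =>
    obtain rfl : u = z := hG.dist_eq_zero_iff.1 hz
    exact Finset.card_le_one.1 hu x (mem_neighbors hzx) y (mem_neighbors hzy)
  | succ k =>
    obtain ⟨w, hwz, hw⟩ := exists_adj_dist_eq_of_dist_eq_succ hz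
    by_contra hxy
    have hwx : w ≠ x := by rintro rfl; omega
    have hwy : w ≠ y := by rintro rfl; omega
    exact (hdeg z).not_gt <| Finset.two_lt_card.2
      ⟨w, mem_neighbors hwz.symm, x, mem_neighbors hzx, y, mem_neighbors hzy, hwx, hwy, hxy⟩

lemma dist_injective_of_degree_le_two (hdeg : ∀ v, G.degree v ≤ 2) (hu : G.degree u ≤ 1)
    (hG : G.Connected) : Function.Injective (G.dist u) := by
  suffices h : ∀ k x y, G.dist u x = k → G.dist u y = k → x = y from
    fun x y hxy ↦ h _ x y hxy rfl
  intro k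
  induction k with
  | zero =>
    intro x y hx hy
    rw [← hG.dist_eq_zero_iff.1 hx, ← hG.dist_eq_zero_iff.1 hy]
  | succ k ih =>
    intro x y hx hy
    obtain ⟨z, hzx, hz⟩ := exists_adj_dist_eq_of_dist_eq_succ hx
    obtain ⟨z', hzy, hz'⟩ := exists_adj_dist_eq_of_dist_eq_succ hy
    obtain rfl := ih z z' hz hz'
    exact eq_of_adj_of_dist_eq_dist_add_one hdeg hu hG hzx hzy (by rw [hx, hz]) (by rw [hy, hz])

end DistanceFromVertex

lemma degree_pathGraph_le_two {n : ℕ} (i : Fin n) [Fintype ((pathGraph n).neighborSet i)] :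
    (pathGraph n).degree i ≤ 2 := by
  by_contra! h
  obtain ⟨a, ha, b, hb, c, hc, hab, hac, hbc⟩ := Finset.two_lt_card.1 h
  rw [mem_neighborFinset, pathGraph_adj] at ha hb hc
  omega

lemma eq_or_eq_of_adj_of_degree_eq_one {V : Type*} {G : SimpleGraph V} [G.LocallyFinite]
    (hG : G.Preconnected) {a b : V} (hab : G.Adj a b) (ha : G.degree a = 1) (hb : G.degree b = 1)
    (v : V) : v = a ∨ v = b := by
  by_contra hv
  obtain ⟨p⟩ := hG a v
  obtain ⟨⟨⟨x, y⟩, hxy⟩, -, hx, hy⟩ := p.exists_boundary_dart {a, b} (Or.inl rfl) hv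
  rw [degree_eq_one_iff_existsUnique_adj] at ha hb
  obtain rfl | rfl := hx
  · exact hy (Or.inr (ha.unique hxy hab))
  · exact hy (Or.inl (hb.unique hxy hab.symm))

section Leaves

variable {V : Type*} [Fintype V] (G : SimpleGraph V)

/-- The leaves (pendant vertices) of a finite graph, whose number is compared with the Albertson
index. -/
def leafFinset [DecidableRel G.Adj] : Finset V := {v | G.degree v = 1}

lemma card_leafFinset_add_two_mul_card_edgeFinset [DecidableRel G.Adj]
    (hpos : ∀ v, 0 < G.degree v) :
    #(leafFinset G) + 2 * #G.edgeFinset = 2 * Fintype.card V + ∑ v, (G.degree v - 2) := by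
  have key (v : V) :
      (if G.degree v = 1 then 1 else 0) + G.degree v = 2 + (G.degree v - 2) := by
    have := hpos v
    split_ifs <;> omega
  calc #(leafFinset G) + 2 * #G.edgeFinset
      = ∑ v, ((if G.degree v = 1 then 1 else 0) + G.degree v) := by
        rw [sum_add_distrib, ← card_filter, sum_degrees_eq_twice_card_edges, leafFinset]
    _ = ∑ v, (2 + (G.degree v - 2)) := sum_congr rfl fun v _ ↦ key v
    _ = 2 * Fintype.card V + ∑ v, (G.degree v - 2) := by
        rw [sum_add_distrib, sum_const, card_univ, smul_eq_mul, mul_comm]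

variable {G}

lemma card_leafFinset_of_isTree [DecidableRel G.Adj] [Nontrivial V] (hG : G.IsTree) :
    #(leafFinset G) = 2 + ∑ v, (G.degree v - 2) := by
  have hcount := card_leafFinset_add_two_mul_card_edgeFinset G
    fun v ↦ hG.connected.preconnected.degree_pos_of_nontrivial v
  have hedges := hG.card_edgeFinset
  omega

lemma card_leafFinset_eq_two_iff [DecidableRel G.Adj] [Nontrivial V] (hG : G.IsTree) :
    #(leafFinset G) = 2 ↔ ∀ v, G.degree v ≤ 2 := by
  simp [card_leafFinset_of_isTree hG, Nat.sub_eq_zero_iff_le]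

lemma nonempty_iso_pathGraph_iff [DecidableRel G.Adj] [Nontrivial V] (hG : G.IsTree) :
    Nonempty (G ≃g pathGraph (Fintype.card V)) ↔ ∀ v, G.degree v ≤ 2 := by
  constructor
  · rintro ⟨φ⟩ v
    exact φ.degree_eq v ▸ degree_pathGraph_le_two (φ v)
  · intro hdeg
    obtain ⟨u, hu⟩ := hG.exists_vert_degree_one_of_nontrivial
    exact nonempty_iso_pathGraph_of_dist_injective hG.connected
      (dist_injective_of_degree_le_two hdeg hu.le hG.connected)

end Leaves

section Albertson

variable {V : Type*} [Fintype V] {G : SimpleGraph V}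

lemma sum_edgeFinset_sum_toFinset [DecidableEq V] [DecidableRel G.Adj] [Fintype G.edgeSet]
    {M : Type*} [AddCommMonoid M] (f : V → M) :
    ∑ e ∈ G.edgeFinset, ∑ v ∈ e.toFinset, f v = ∑ v, G.degree v • f v := by
  calc ∑ e ∈ G.edgeFinset, ∑ v ∈ e.toFinset, f v
      = ∑ v, ∑ _e ∈ G.incidenceFinset v, f v :=
        sum_comm' fun e v ↦ by simp [incidenceFinset_eq_filter]
    _ = ∑ v, G.degree v • f v := by
        simp only [sum_const, card_incidenceFinset_eq_degree]

lemma sum_degree_mul_le_irr {f : V → ℕ}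
    (hf : ∀ ⦃a b⦄, G.Adj a b → f a + f b ≤ ((G.degree a : ℤ) - G.degree b).natAbs) :
    ∑ v, G.degree v * f v ≤ irr G := by
  classical
  simp only [← smul_eq_mul]
  rw [irr, ← sum_edgeFinset_sum_toFinset]
  refine sum_le_sum fun e he ↦ ?_
  induction e with | _ a b
  have hab : G.Adj a b := mem_edgeFinset.1 he
  rw [Sym2.toFinset_mk_eq, sum_pair hab.ne]
  exact hf hab

lemma irr_le_sum_degree_mul {f : V → ℕ}
    (hf : ∀ ⦃a b⦄, G.Adj a b → ((G.degree a : ℤ) - G.degree b).natAbs ≤ f a + f b) :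
    irr G ≤ ∑ v, G.degree v * f v := by
  classical
  simp only [← smul_eq_mul]
  rw [irr, ← sum_edgeFinset_sum_toFinset]
  refine sum_le_sum fun e he ↦ ?_
  induction e with | _ a b
  have hab : G.Adj a b := mem_edgeFinset.1 he
  rw [Sym2.toFinset_mk_eq, sum_pair hab.ne]
  exact hf hab

lemma card_leafFinset_eq_sum_degree_mul [DecidableRel G.Adj] :
    #(leafFinset G) = ∑ v, G.degree v * if G.degree v = 1 then 1 else 0 := by
  rw [leafFinset, card_filter]
  refine sum_congr rfl fun v _ ↦ ?_
  split_ifs with hv <;> simp [hv]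

lemma card_leafFinset_le_irr (hG : G.Connected) (hcard : 2 < Fintype.card V) :
    #(leafFinset G) ≤ irr G := by
  classical
  rw [card_leafFinset_eq_sum_degree_mul]
  refine sum_degree_mul_le_irr fun a b hab ↦ ?_
  have not_both_leaves : ¬(G.degree a = 1 ∧ G.degree b = 1) := by
    rintro ⟨ha, hb⟩
    have huniv : (univ : Finset V) ⊆ {a, b} := fun v _ ↦ by
      simpa using eq_or_eq_of_adj_of_degree_eq_one hG.preconnected hab ha hb v
    exact hcard.not_ge ((card_le_card huniv).trans card_le_two)
  have := hab.degree_pos_left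
  have := hab.degree_pos_right
  split_ifs <;> omega

lemma irr_le_card_leafFinset (hdeg : ∀ v, G.degree v ≤ 2) : irr G ≤ #(leafFinset G) := by
  rw [card_leafFinset_eq_sum_degree_mul]
  refine irr_le_sum_degree_mul fun a b hab ↦ ?_
  have := hdeg a
  have := hdeg b
  have := hab.degree_pos_left
  have := hab.degree_pos_right
  split_ifs <;> omega

end Albertson

/-- Among trees of order `n ≥ 3`, the path uniquely minimizes the Albertson index:
`irr(T) ≥ 2`, with equality iff `T ≅ P_n`. -/
theorem path_unique_min_irr {V : Type*} [Fintype V] (T : SimpleGraph V) (hT : T.IsTree)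
    (n : ℕ) (hn : Fintype.card V = n) (h3 : 3 ≤ n) :
    2 ≤ irr T ∧ (irr T = 2 ↔ Nonempty (T ≃g pathGraph n)) := by
  subst hn
  have : Nontrivial V := Fintype.one_lt_card_iff_nontrivial.1 (by omega)
  have hleaves : 2 ≤ #(leafFinset T) := card_leafFinset_of_isTree hT ▸ Nat.le_add_right 2 _
  have hle : #(leafFinset T) ≤ irr T := card_leafFinset_le_irr hT.connected h3
  refine ⟨hleaves.trans hle, ?_⟩
  rw [nonempty_iso_pathGraph_iff hT, ← card_leafFinset_eq_two_iff hT]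
  constructor
  · intro hirr
    exact (hirr ▸ hle).antisymm hleaves
  · intro htwo
    have hdeg : ∀ v, T.degree v ≤ 2 := (card_leafFinset_eq_two_iff hT).1 htwo
    exact ((irr_le_card_leafFinset hdeg).antisymm hle).trans htwo
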